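/- Suppose the open interval (σ,τ) in the permutation pattern poset is disconnected. Then for any permutation α, the open interval (α ⊕ σ, α ⊕ τ) is also disconnected. -/

import Mathlib

open scoped Classical

/-- The set of all (finite) permutations, as patterns: a permutation of length `n`
together with its length. -/
abbrev PermPt := Σ n : ℕ, Equiv.Perm (Fin n)

/-- Pattern containment order: `σ` occurs in `τ` if there is a strictly monotone
choice of positions on which `τ` is order-isomorphic to `σ`. -/
def ple (σ τ : PermPt) : Prop :=
  ∃ f : Fin σ.1 → Fin τ.1, StrictMono f ∧
    ∀ a b : Fin σ.1, σ.2 a ≤ σ.2 b ↔ τ.2 (f a) ≤ τ.2 (f b)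

/-- Strict pattern containment. -/
def plt (σ τ : PermPt) : Prop := ple σ τ ∧ ¬ ple τ σ

/-- Direct sum of permutations. -/
def pds {m n : ℕ} (α : Equiv.Perm (Fin m)) (β : Equiv.Perm (Fin n)) :
    Equiv.Perm (Fin (m + n)) :=
  finSumFinEquiv.symm.trans ((Equiv.sumCongr α β).trans finSumFinEquiv)

/-- Skew sum of permutations. -/
def pss {m n : ℕ} (α : Equiv.Perm (Fin m)) (β : Equiv.Perm (Fin n)) :
    Equiv.Perm (Fin (m + n)) :=
  finSumFinEquiv.symm.trans
    (((Equiv.sumCongr α β).trans (Equiv.sumComm (Fin m) (Fin n))).trans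
      (finSumFinEquiv.trans (finCongr (Nat.add_comm n m))))

/-- Direct sum, as an operation on `PermPt`. -/
def pdsP (a b : PermPt) : PermPt := ⟨a.1 + b.1, pds a.2 b.2⟩

/-- Skew sum, as an operation on `PermPt`. -/
def pssP (a b : PermPt) : PermPt := ⟨a.1 + b.1, pss a.2 b.2⟩

/-- The empty permutation. -/
def pempty : PermPt := ⟨0, 1⟩

/-- The permutation `1` of length one. -/
def pone : PermPt := ⟨1, 1⟩

/-- A permutation is decomposable if it is the direct sum of two nonempty
permutations, i.e. some proper nonempty initial segment of positions is mapped
to the corresponding initial segment of values. -/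
def Decomp {n : ℕ} (σ : Equiv.Perm (Fin n)) : Prop :=
  ∃ m : ℕ, 0 < m ∧ m < n ∧ ∀ i : Fin n, (i : ℕ) < m → (σ i : ℕ) < m

/-- Disconnectedness of a set of permutations under pattern containment:
it splits into two nonempty parts with no comparabilities between them. -/
def Disconn (S : Set PermPt) : Prop :=
  ∃ A B : Set PermPt, A ∪ B = S ∧ A.Nonempty ∧ B.Nonempty ∧
    ∀ x ∈ A, ∀ y ∈ B, ¬ ple x y ∧ ¬ ple y x

/-! If `α` is sum-indecomposable, the elements of `(α ⊕ σ, α ⊕ τ)` are the `α ⊕ π` with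
`π ∈ (σ, τ)`, together with extra elements `a ⊕ p` in which only a proper subpattern `a` of `α` has
been added and `α ⊕ σ ≤ p ≤ τ`. Extra elements therefore exist only if `α ⊕ σ ≤ τ`, and then
`α ⊕ σ` belongs to at most one of the two parts of `(σ, τ)`. The image under `α ⊕ ·` of a part not
containing `α ⊕ σ` is comparable to no extra element, so it splits off from `(α ⊕ σ, α ⊕ τ)`.
An arbitrary `α` is a direct sum of indecomposable ones, added one at a time. -/

local infixl:65 " ⊕ₚ " => pdsP

section Occurrences

variable {l m n : ℕ} {π : Equiv.Perm (Fin l)} {ρ : Equiv.Perm (Fin m)} {ω : Equiv.Perm (Fin n)}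

/-- `f` lists the positions of an occurrence of the pattern `π` in `ρ`. -/
structure IsOccurrence (π : Equiv.Perm (Fin l)) (ρ : Equiv.Perm (Fin m)) (f : Fin l → Fin m) :
    Prop where
  strictMono : StrictMono f
  le_iff_le (i j : Fin l) : π i ≤ π j ↔ ρ (f i) ≤ ρ (f j)

namespace IsOccurrence

protected lemma id (π : Equiv.Perm (Fin l)) : IsOccurrence π π id :=
  ⟨strictMono_id, fun _ _ ↦ Iff.rfl⟩

lemma comp {g : Fin m → Fin n} {f : Fin l → Fin m} (hg : IsOccurrence ρ ω g)
    (hf : IsOccurrence π ρ f) : IsOccurrence π ω (g ∘ f) :=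
  ⟨hg.strictMono.comp hf.strictMono,
    fun i j ↦ (hf.le_iff_le i j).trans (hg.le_iff_le (f i) (f j))⟩

lemma of_comp {g : Fin m → Fin n} {f : Fin l → Fin m} (hg : IsOccurrence ρ ω g)
    (hgf : IsOccurrence π ω (g ∘ f)) : IsOccurrence π ρ f :=
  ⟨fun _ _ hij ↦ hg.strictMono.lt_iff_lt.1 (hgf.strictMono hij),
    fun i j ↦ (hgf.le_iff_le i j).trans (hg.le_iff_le (f i) (f j)).symm⟩

lemma length_le {f : Fin l → Fin m} (hf : IsOccurrence π ρ f) : l ≤ m := by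
  simpa using Fintype.card_le_of_injective f hf.strictMono.injective

lemma perm_eq {π ρ : Equiv.Perm (Fin n)} {f : Fin n → Fin n} (hf : IsOccurrence π ρ f) :
    π = ρ := by
  obtain rfl : f = id := hf.strictMono.eq_id
  have hmono : StrictMono (ρ ∘ π.symm) := fun i j hij ↦
    not_le.1 (mt (hf.le_iff_le (π.symm j) (π.symm i)).2 (by simpa using hij))
  exact Equiv.ext fun i ↦ by simpa using (congrFun hmono.eq_id (π i)).symm

end IsOccurrence

end Occurrences

section PatternOrder

variable {x y : PermPt}

lemma ple_iff_exists_isOccurrence : ple x y ↔ ∃ f, IsOccurrence x.2 y.2 f :=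
  ⟨fun ⟨f, hf, h⟩ ↦ ⟨f, hf, h⟩, fun ⟨f, hf⟩ ↦ ⟨f, hf.strictMono, hf.le_iff_le⟩⟩

lemma ple.length_le (h : ple x y) : x.1 ≤ y.1 :=
  (ple_iff_exists_isOccurrence.1 h).elim fun _ hf ↦ hf.length_le

lemma ple.eq_of_length_le (h : ple x y) (hyx : y.1 ≤ x.1) : x = y := by
  obtain ⟨n, π⟩ := x
  obtain ⟨m, ρ⟩ := y
  obtain rfl : n = m := h.length_le.antisymm hyx
  obtain ⟨f, hf⟩ := ple_iff_exists_isOccurrence.1 h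
  exact congrArg (Sigma.mk n) hf.perm_eq

instance : PartialOrder PermPt where
  le := ple
  lt := plt
  le_refl x := ple_iff_exists_isOccurrence.2 ⟨id, .id x.2⟩
  le_trans x y z hxy hyz := by
    obtain ⟨f, hf⟩ := ple_iff_exists_isOccurrence.1 hxy
    obtain ⟨g, hg⟩ := ple_iff_exists_isOccurrence.1 hyz
    exact ple_iff_exists_isOccurrence.2 ⟨g ∘ f, hg.comp hf⟩
  lt_iff_le_not_ge _ _ := Iff.rfl
  le_antisymm _ _ hxy hyx := hxy.eq_of_length_le hyx.length_le

lemma le_iff_exists_isOccurrence : x ≤ y ↔ ∃ f, IsOccurrence x.2 y.2 f :=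
  ple_iff_exists_isOccurrence

lemma lt_of_le_of_length_lt (h : x ≤ y) (hlt : x.1 < y.1) : x < y :=
  h.lt_of_ne fun he ↦ hlt.ne (congrArg Sigma.fst he)

lemma length_lt_of_lt (h : x < y) : x.1 < y.1 :=
  not_le.1 fun hyx ↦ h.ne (ple.eq_of_length_le h.le hyx)

end PatternOrder

section DirectSum

variable {k l m n : ℕ} (α : Equiv.Perm (Fin m)) (β : Equiv.Perm (Fin n))

@[simp]
lemma pds_castAdd (i : Fin m) : pds α β (Fin.castAdd n i) = Fin.castAdd n (α i) := by
  simp [pds]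

@[simp]
lemma pds_natAdd (i : Fin n) : pds α β (Fin.natAdd m i) = Fin.natAdd m (β i) := by
  simp [pds]

lemma castAdd_lt_natAdd (i : Fin m) (j : Fin n) : Fin.castAdd n i < Fin.natAdd m j :=
  Fin.lt_def.2 (i.isLt.trans_le (Nat.le_add_right m j))

lemma pds_val_lt_iff (i : Fin (m + n)) : (pds α β i : ℕ) < m ↔ (i : ℕ) < m := by
  induction i using Fin.addCases <;> simp

lemma pds_cast_add_assoc (γ : Equiv.Perm (Fin l)) (i : Fin (m + n + l)) :
    pds α (pds β γ) (Fin.cast (Nat.add_assoc m n l) i) =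
      Fin.cast (Nat.add_assoc m n l) (pds (pds α β) γ i) := by
  induction i using Fin.addCases with
  | left i =>
    induction i using Fin.addCases with
    | left i =>
      have (j : Fin m) : Fin.cast (Nat.add_assoc m n l) (Fin.castAdd l (Fin.castAdd n j)) =
          Fin.castAdd (n + l) j := rfl
      simp only [pds_castAdd, this]
    | right i =>
      have (j : Fin n) : Fin.cast (Nat.add_assoc m n l) (Fin.castAdd l (Fin.natAdd m j)) =
          Fin.natAdd m (Fin.castAdd l j) := rfl
      simp only [pds_castAdd, pds_natAdd, this]
  | right i => simp [← Fin.natAdd_natAdd]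

lemma isOccurrence_castAdd : IsOccurrence α (pds α β) (Fin.castAdd n) :=
  ⟨Fin.strictMono_castAdd n, fun i j ↦ by
    rw [pds_castAdd, pds_castAdd, (Fin.strictMono_castAdd n).le_iff_le]⟩

lemma isOccurrence_natAdd : IsOccurrence β (pds α β) (Fin.natAdd m) :=
  ⟨Fin.strictMono_natAdd m, fun i j ↦ by simp⟩

variable {α β}

namespace IsOccurrence

variable {π : Equiv.Perm (Fin k)} {ρ : Equiv.Perm (Fin l)}

lemma directSum {f : Fin k → Fin m} {g : Fin l → Fin n} (hf : IsOccurrence π α f)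
    (hg : IsOccurrence ρ β g) :
    IsOccurrence (pds π ρ) (pds α β)
      (Fin.addCases (fun i ↦ Fin.castAdd n (f i)) (fun i ↦ Fin.natAdd m (g i))) where
  strictMono i j hij := by
    induction i using Fin.addCases with
    | left i =>
      induction j using Fin.addCases with
      | left j => simpa using Fin.strictMono_castAdd n (hf.strictMono hij)
      | right j => simpa using castAdd_lt_natAdd (f i) (g j)
    | right i =>
      induction j using Fin.addCases with
      | left j => exact absurd hij (castAdd_lt_natAdd j i).not_gt
      | right j => simpa using hg.strictMono (by simpa using hij)
  le_iff_le i j := by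
    induction i using Fin.addCases with
    | left i =>
      induction j using Fin.addCases with
      | left j =>
        simp only [Fin.addCases_left, pds_castAdd, (Fin.strictMono_castAdd _).le_iff_le,
          hf.le_iff_le i j]
      | right j => simp [(castAdd_lt_natAdd _ _).le]
    | right i =>
      induction j using Fin.addCases with
      | left j => simp [(castAdd_lt_natAdd _ _).not_ge]
      | right j => simp [hg.le_iff_le i j]

lemma exists_of_val_lt {f : Fin k → Fin (m + n)} (hf : IsOccurrence π (pds α β) f)
    (h : ∀ i, (f i : ℕ) < m) : ∃ g, IsOccurrence π α g :=
  ⟨fun i ↦ (f i).castLT (h i), (isOccurrence_castAdd α β).of_comp hf⟩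

lemma exists_of_le_val {f : Fin k → Fin (m + n)} (hf : IsOccurrence π (pds α β) f)
    (h : ∀ i, m ≤ (f i : ℕ)) : ∃ g, IsOccurrence π β g := by
  choose g hg using fun i ↦ (Fin.range_natAdd m n).ge (h i)
  obtain rfl : Fin.natAdd m ∘ g = f := funext hg
  exact ⟨g, (isOccurrence_natAdd α β).of_comp hf⟩

end IsOccurrence

end DirectSum

section DirectSumOrder

variable {a b c x y : PermPt}

lemma le_pdsP_right (b c : PermPt) : c ≤ b ⊕ₚ c :=
  le_iff_exists_isOccurrence.2 ⟨_, isOccurrence_natAdd b.2 c.2⟩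

lemma pdsP_le_pdsP (hab : a ≤ b) (hxy : x ≤ y) : a ⊕ₚ x ≤ b ⊕ₚ y := by
  obtain ⟨f, hf⟩ := le_iff_exists_isOccurrence.1 hab
  obtain ⟨g, hg⟩ := le_iff_exists_isOccurrence.1 hxy
  exact le_iff_exists_isOccurrence.2 ⟨_, hf.directSum hg⟩

lemma pempty_pdsP (x : PermPt) : pempty ⊕ₚ x = x :=
  (ple.eq_of_length_le (le_pdsP_right pempty x) (by simp [pdsP, pempty])).symm

lemma pdsP_assoc (a b c : PermPt) : a ⊕ₚ b ⊕ₚ c = a ⊕ₚ (b ⊕ₚ c) := by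
  refine ple.eq_of_length_le ?_ (Nat.add_assoc _ _ _).ge
  refine le_iff_exists_isOccurrence.2 ⟨_, Fin.cast_strictMono (Nat.add_assoc _ _ _), fun i j ↦ ?_⟩
  exact pds_cast_add_assoc a.2 b.2 c.2 i ▸ pds_cast_add_assoc a.2 b.2 c.2 j ▸ Iff.rfl

lemma lt_pdsP_right (hb : 0 < b.1) (c : PermPt) : c < b ⊕ₚ c :=
  lt_of_le_of_length_lt (le_pdsP_right b c) (Nat.lt_add_of_pos_left hb)

lemma pdsP_lt_pdsP_right (hab : a < b) (x : PermPt) : a ⊕ₚ x < b ⊕ₚ x :=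
  lt_of_le_of_length_lt (pdsP_le_pdsP hab.le le_rfl)
    (Nat.add_lt_add_right (length_lt_of_lt hab) x.1)

lemma le_left_of_pdsP_eq (h : a ⊕ₚ x = b ⊕ₚ c) (hab : a.1 ≤ b.1) : a ≤ b := by
  have hex : ∃ f, IsOccurrence a.2 (a ⊕ₚ x).2 f ∧ ∀ i, (f i : ℕ) < a.1 :=
    ⟨_, isOccurrence_castAdd a.2 x.2, fun i ↦ i.isLt⟩
  rw [h] at hex
  obtain ⟨f, hf, hlt⟩ := hex
  exact le_iff_exists_isOccurrence.2 (hf.exists_of_val_lt fun i ↦ (hlt i).trans_le hab)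

lemma le_right_of_pdsP_eq (h : a ⊕ₚ x = b ⊕ₚ c) (hba : b.1 ≤ a.1) : x ≤ c := by
  have hex : ∃ f, IsOccurrence x.2 (a ⊕ₚ x).2 f ∧ ∀ i, a.1 ≤ (f i : ℕ) :=
    ⟨_, isOccurrence_natAdd a.2 x.2, fun i ↦ Nat.le_add_right a.1 i⟩
  rw [h] at hex
  obtain ⟨f, hf, hle⟩ := hex
  exact le_iff_exists_isOccurrence.2 (hf.exists_of_le_val fun i ↦ hba.trans (hle i))

end DirectSumOrder

section Splitting

/-- `π` maps its first `k` positions to its `k` smallest values, so that `π` is the direct sum of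
a permutation of length `k` and another one. -/
def SplitsAt {n : ℕ} (π : Equiv.Perm (Fin n)) (k : ℕ) : Prop :=
  ∀ i : Fin n, (i : ℕ) < k → (π i : ℕ) < k

lemma splitsAt_pds {m n : ℕ} (α : Equiv.Perm (Fin m)) (β : Equiv.Perm (Fin n)) :
    SplitsAt (pds α β) m :=
  fun i ↦ (pds_val_lt_iff α β i).2

lemma SplitsAt.of_pds {m n k : ℕ} {α : Equiv.Perm (Fin m)} {β : Equiv.Perm (Fin n)}
    (h : SplitsAt (pds α β) k) : SplitsAt α k :=
  fun i hi ↦ by simpa using h (Fin.castAdd n i) hi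

lemma SplitsAt.exists_eq_pds {k l : ℕ} {π : Equiv.Perm (Fin (k + l))} (h : SplitsAt π k) :
    ∃ β γ, π = pds β γ := by
  have hinl : Set.MapsTo (finSumFinEquiv.trans (π.trans finSumFinEquiv.symm))
      (Set.range (Sum.inl : Fin k → Fin k ⊕ Fin l)) (Set.range Sum.inl) := by
    rintro _ ⟨i, rfl⟩
    refine ⟨(π (Fin.castAdd l i)).castLT (h _ i.isLt), ?_⟩
    rw [← Equiv.apply_eq_iff_eq finSumFinEquiv]
    simp
  obtain ⟨⟨β, γ⟩, hβγ⟩ := Equiv.Perm.mem_sumCongrHom_range_of_perm_mapsTo_inl hinl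
  have hβγ : Equiv.sumCongr β γ = finSumFinEquiv.trans (π.trans finSumFinEquiv.symm) := hβγ
  refine ⟨β, γ, Equiv.ext fun i ↦ ?_⟩
  rw [pds, hβγ]
  simp

lemma SplitsAt.exists_eq_pdsP {x : PermPt} {k : ℕ} (h : SplitsAt x.2 k) (hk : k ≤ x.1) :
    ∃ b c : PermPt, b.1 = k ∧ x = b ⊕ₚ c := by
  obtain ⟨n, π⟩ := x
  obtain ⟨l, rfl⟩ := Nat.exists_eq_add_of_le hk
  obtain ⟨β, γ, rfl⟩ := h.exists_eq_pds
  exact ⟨⟨k, β⟩, ⟨l, γ⟩, rfl, rfl⟩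

lemma mem_iff_val_lt_card_of_isLowerSet {n : ℕ} {s : Finset (Fin n)}
    (hs : IsLowerSet (s : Set (Fin n))) (i : Fin n) : i ∈ s ↔ (i : ℕ) < s.card := by
  refine ⟨fun hi ↦ ?_, fun hi ↦ ?_⟩
  · have : Finset.Iic i ⊆ s := fun j hj ↦ hs (Finset.mem_Iic.1 hj) hi
    simpa using Finset.card_le_card this
  · by_contra his
    have : s ⊆ Finset.Iio i := fun j hj ↦
      Finset.mem_Iio.2 (not_le.1 fun hij ↦ his (hs hij hj))
    exact hi.not_ge (by simpa using Finset.card_le_card this)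

lemma IsOccurrence.exists_splitsAt {l m n : ℕ} {π : Equiv.Perm (Fin l)} {β : Equiv.Perm (Fin m)}
    {γ : Equiv.Perm (Fin n)} {f : Fin l → Fin (m + n)} (hf : IsOccurrence π (pds β γ) f) :
    ∃ k ≤ l, SplitsAt π k ∧ ∀ i, (f i : ℕ) < m ↔ (i : ℕ) < k := by
  let s : Finset (Fin l) := {i | (f i : ℕ) < m}
  have hpos : IsLowerSet (s : Set (Fin l)) := fun i j hji hi ↦ by
    simp only [s, Finset.mem_coe, Finset.mem_filter_univ] at hi ⊢
    exact (Fin.le_def.1 (hf.strictMono.monotone hji)).trans_lt hi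
  have hval : IsLowerSet (s.map π.toEmbedding : Set (Fin l)) := fun u v hvu hu ↦ by
    simp only [s, Finset.mem_coe, Finset.mem_map_equiv, Finset.mem_filter_univ] at hu ⊢
    rw [← pds_val_lt_iff β γ] at hu ⊢
    have hle := (hf.le_iff_le (π.symm v) (π.symm u)).1 (by simpa using hvu)
    exact (Fin.le_def.1 hle).trans_lt hu
  refine ⟨s.card, by simpa using s.card_le_univ, fun i hi ↦ ?_, fun i ↦ ?_⟩
  · rw [← s.card_map π.toEmbedding, ← mem_iff_val_lt_card_of_isLowerSet hval]
    exact Finset.mem_map_of_mem _ ((mem_iff_val_lt_card_of_isLowerSet hpos i).2 hi)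
  · rw [← mem_iff_val_lt_card_of_isLowerSet hpos]
    simp only [s, Finset.mem_filter_univ]

variable {a b c x y : PermPt}

lemma exists_eq_pdsP_of_le_pdsP (h : x ≤ b ⊕ₚ c) :
    ∃ b' ≤ b, ∃ c' ≤ c, x = b' ⊕ₚ c' := by
  obtain ⟨f, hf⟩ := le_iff_exists_isOccurrence.1 h
  obtain ⟨k, hk, hsplit, hfk⟩ := hf.exists_splitsAt
  obtain ⟨b', c', rfl, rfl⟩ := hsplit.exists_eq_pdsP hk
  have hleft := hf.comp (isOccurrence_castAdd b'.2 c'.2)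
  have hright := hf.comp (isOccurrence_natAdd b'.2 c'.2)
  refine ⟨b', ?_, c', ?_, rfl⟩ <;> rw [le_iff_exists_isOccurrence]
  · exact hleft.exists_of_val_lt fun i ↦ (hfk _).2 i.isLt
  · exact hright.exists_of_le_val fun i ↦ not_lt.1 (mt (hfk _).1 (by simp))

lemma pdsP_le_pdsP_iff_left : a ⊕ₚ x ≤ a ⊕ₚ y ↔ x ≤ y := by
  refine ⟨fun h ↦ ?_, pdsP_le_pdsP le_rfl⟩
  obtain ⟨b, hb, c, hc, he⟩ := exists_eq_pdsP_of_le_pdsP h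
  exact (le_right_of_pdsP_eq he hb.length_le).trans hc

lemma pdsP_lt_pdsP_iff_left : a ⊕ₚ x < a ⊕ₚ y ↔ x < y :=
  lt_iff_lt_of_le_iff_le' pdsP_le_pdsP_iff_left pdsP_le_pdsP_iff_left

lemma pdsP_right_injective (a : PermPt) : Function.Injective (pdsP a) := fun _ _ h ↦
  le_antisymm (pdsP_le_pdsP_iff_left.1 h.le) (pdsP_le_pdsP_iff_left.1 h.ge)

end Splitting

section Induction

lemma eq_pempty_of_length_eq_zero {x : PermPt} (h : x.1 = 0) : x = pempty := by
  obtain ⟨n, π⟩ := x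
  obtain rfl : n = 0 := h
  exact congrArg (Sigma.mk 0) (Subsingleton.elim π 1)

lemma pdsP_induction {P : PermPt → Prop} (empty : P pempty)
    (indec : ∀ α : PermPt, 0 < α.1 → ¬ Decomp α.2 → P α)
    (sum : ∀ a b : PermPt, P a → P b → P (a ⊕ₚ b)) (α : PermPt) : P α := by
  induction hn : α.1 using Nat.strong_induction_on generalizing α with
  | _ n ih =>
    subst hn
    rcases Nat.eq_zero_or_pos α.1 with h0 | hpos
    · exact eq_pempty_of_length_eq_zero h0 ▸ empty
    by_cases hdec : Decomp α.2
    · obtain ⟨k, hk, hkα, hsplit⟩ := hdec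
      obtain ⟨a, b, rfl, rfl⟩ := SplitsAt.exists_eq_pdsP hsplit hkα.le
      have hab : (a ⊕ₚ b).1 = a.1 + b.1 := rfl
      exact sum a b (ih a.1 hkα a rfl) (ih b.1 (by lia) b rfl)
    · exact indec α hpos hdec

end Induction

section Indecomposable

variable {α a b c x y : PermPt}

lemma pdsP_le_right_of_not_decomp (hα : ¬ Decomp α.2) (h : α ⊕ₚ x ≤ b ⊕ₚ c) (hαb : ¬ α ≤ b) :
    α ⊕ₚ x ≤ c := by
  obtain ⟨b', hb, c', hc, he⟩ := exists_eq_pdsP_of_le_pdsP h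
  have hlt : b'.1 < α.1 := by
    by_contra! hle
    exact hαb ((le_left_of_pdsP_eq he hle).trans hb)
  have hsplit : SplitsAt α.2 b'.1 := by
    have : SplitsAt (α ⊕ₚ x).2 b'.1 := he ▸ splitsAt_pds b'.2 c'.2
    exact this.of_pds
  have h0 : b'.1 = 0 := by
    by_contra h0
    exact hα ⟨b'.1, Nat.pos_of_ne_zero h0, hlt, hsplit⟩
  rwa [he, eq_pempty_of_length_eq_zero h0, pempty_pdsP]

lemma eq_pdsP_or_of_pdsP_le_of_le_pdsP (hα : ¬ Decomp α.2) (hx : α ⊕ₚ a ≤ x) (hx' : x ≤ α ⊕ₚ b) :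
    (∃ p, x = α ⊕ₚ p) ∨ ∃ α' < α, ∃ p ≤ b, α ⊕ₚ a ≤ p ∧ x = α' ⊕ₚ p := by
  obtain ⟨α', hα', p, hp, rfl⟩ := exists_eq_pdsP_of_le_pdsP hx'
  rcases hα'.eq_or_lt with rfl | hlt
  · exact Or.inl ⟨p, rfl⟩
  · exact Or.inr ⟨α', hlt, p, hp, pdsP_le_right_of_not_decomp hα hx hlt.not_ge, rfl⟩

end Indecomposable

section Components

/-- `B` is a union of connected components of the comparability graph of `S`. -/
structure IsComponentUnion {P : Type*} [LE P] (B S : Set P) : Prop where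
  subset : B ⊆ S
  mem_of_le {x y : P} : x ∈ S → y ∈ B → x ≤ y → x ∈ B
  mem_of_ge {x y : P} : x ∈ S → y ∈ B → y ≤ x → x ∈ B

lemma IsComponentUnion.sdiff {P : Type*} [LE P] {B S : Set P} (h : IsComponentUnion B S) :
    IsComponentUnion (S \ B) S where
  subset := Set.sdiff_subset
  mem_of_le hx hy hxy := ⟨hx, fun hxB ↦ hy.2 (h.mem_of_ge hy.1 hxB hxy)⟩
  mem_of_ge hx hy hyx := ⟨hx, fun hxB ↦ hy.2 (h.mem_of_le hy.1 hxB hyx)⟩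

lemma disconn_iff_exists_isComponentUnion {S : Set PermPt} :
    Disconn S ↔ ∃ B, IsComponentUnion B S ∧ B.Nonempty ∧ (S \ B).Nonempty := by
  constructor
  · rintro ⟨A, B, rfl, ⟨a, ha⟩, hB, hAB⟩
    refine ⟨B, ⟨Set.subset_union_right, ?_, ?_⟩, hB,
      a, Or.inl ha, fun haB ↦ (hAB a ha a haB).1 (le_refl a)⟩
    · rintro x y (hx | hx) hy hxy
      exacts [absurd hxy (hAB x hx y hy).1, hx]
    · rintro x y (hx | hx) hy hyx
      exacts [absurd hyx (hAB x hx y hy).2, hx]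
  · rintro ⟨B, h, hB, hSB⟩
    exact ⟨S \ B, B, Set.sdiff_union_of_subset h.subset, hSB, hB, fun x hx y hy ↦
      ⟨fun hxy ↦ hx.2 (h.mem_of_le hx.1 hy hxy), fun hyx ↦ hx.2 (h.mem_of_ge hx.1 hy hyx)⟩⟩

end Components

section Augmentation

open Set

variable {α σ τ : PermPt} {B : Set PermPt}

lemma pdsP_mem_Ioo_iff {p : PermPt} : α ⊕ₚ p ∈ Ioo (α ⊕ₚ σ) (α ⊕ₚ τ) ↔ p ∈ Ioo σ τ :=
  and_congr pdsP_lt_pdsP_iff_left pdsP_lt_pdsP_iff_left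

lemma pdsP_not_le_of_notMem (hB : IsComponentUnion B (Ioo σ τ)) (hα : 0 < α.1)
    (hαB : α ⊕ₚ σ ∉ B) {b : PermPt} (hb : b ∈ B) : ¬ α ⊕ₚ σ ≤ b := fun hle ↦
  hαB (hB.mem_of_le ⟨lt_pdsP_right hα σ, hle.trans_lt (hB.subset hb).2⟩ hb hle)

lemma mem_image_pdsP_of_le (hB : IsComponentUnion B (Ioo σ τ)) (hα : 0 < α.1)
    (hdec : ¬ Decomp α.2) (hαB : α ⊕ₚ σ ∉ B) {x b : PermPt} (hx : x ∈ Ioo (α ⊕ₚ σ) (α ⊕ₚ τ))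
    (hb : b ∈ B) (hxb : x ≤ α ⊕ₚ b) : x ∈ pdsP α '' B := by
  rcases eq_pdsP_or_of_pdsP_le_of_le_pdsP hdec hx.1.le hxb with
    ⟨p, rfl⟩ | ⟨α', _, p, hpb, hσp, rfl⟩
  · exact mem_image_of_mem _ (hB.mem_of_le (pdsP_mem_Ioo_iff.1 hx) hb (pdsP_le_pdsP_iff_left.1 hxb))
  · exact absurd (hσp.trans hpb) (pdsP_not_le_of_notMem hB hα hαB hb)

lemma pdsP_ne_right_endpoint (hB : IsComponentUnion B (Ioo σ τ)) (hαB : α ⊕ₚ σ ∉ B)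
    {α' b : PermPt} (hα' : 0 < α'.1) (hlt : α' < α) (hb : b ∈ B) : α ⊕ₚ b ≠ τ := by
  rintro rfl
  have hσb : σ < b := (hB.subset hb).1
  have hb' : α' ⊕ₚ b ∈ B :=
    have hbb' := lt_pdsP_right hα' b
    hB.mem_of_ge ⟨hσb.trans hbb', pdsP_lt_pdsP_right hlt b⟩ hb hbb'.le
  have hσ' : α' ⊕ₚ σ ∈ B :=
    have hle : α' ⊕ₚ σ ≤ α' ⊕ₚ b := pdsP_le_pdsP_iff_left.2 hσb.le
    hB.mem_of_le ⟨lt_pdsP_right hα' σ, hle.trans_lt (hB.subset hb').2⟩ hb' hle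
  have hα : 0 < α.1 := hα'.trans (length_lt_of_lt hlt)
  exact hαB (hB.mem_of_ge ⟨lt_pdsP_right hα σ, pdsP_lt_pdsP_iff_left.2 hσb⟩ hσ'
    (pdsP_lt_pdsP_right hlt σ).le)

lemma mem_image_pdsP_of_ge (hB : IsComponentUnion B (Ioo σ τ)) (hα : 0 < α.1)
    (hdec : ¬ Decomp α.2) (hαB : α ⊕ₚ σ ∉ B) {x b : PermPt} (hx : x ∈ Ioo (α ⊕ₚ σ) (α ⊕ₚ τ))
    (hb : b ∈ B) (hbx : α ⊕ₚ b ≤ x) : x ∈ pdsP α '' B := by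
  rcases eq_pdsP_or_of_pdsP_le_of_le_pdsP hdec hbx hx.2.le with
    ⟨p, rfl⟩ | ⟨α', hα', p, hpτ, hbp, rfl⟩
  · exact mem_image_of_mem _ (hB.mem_of_ge (pdsP_mem_Ioo_iff.1 hx) hb (pdsP_le_pdsP_iff_left.1 hbx))
  have hσb : σ < b := (hB.subset hb).1
  have hbb : b < α ⊕ₚ b := lt_pdsP_right hα b
  rcases (hbp.trans hpτ).lt_or_eq with hlt | rfl
  · have hαb : α ⊕ₚ b ∈ B := hB.mem_of_ge ⟨hσb.trans hbb, hlt⟩ hb hbb.le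
    exact absurd (pdsP_le_pdsP_iff_left.2 hσb.le) (pdsP_not_le_of_notMem hB hα hαB hαb)
  obtain rfl : p = α ⊕ₚ b := hpτ.antisymm hbp
  rcases Nat.eq_zero_or_pos α'.1 with h0 | hpos
  · rw [eq_pempty_of_length_eq_zero h0, pempty_pdsP]
    exact mem_image_of_mem _ hb
  · exact absurd rfl (pdsP_ne_right_endpoint hB hαB hpos hα' hb)

lemma IsComponentUnion.image_pdsP (hB : IsComponentUnion B (Ioo σ τ)) (hα : 0 < α.1)
    (hdec : ¬ Decomp α.2) (hαB : α ⊕ₚ σ ∉ B) :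
    IsComponentUnion (pdsP α '' B) (Ioo (α ⊕ₚ σ) (α ⊕ₚ τ)) where
  subset := image_subset_iff.2 fun _ hb ↦ pdsP_mem_Ioo_iff.2 (hB.subset hb)
  mem_of_le := by
    rintro x _ hx ⟨b, hb, rfl⟩ hxb
    exact mem_image_pdsP_of_le hB hα hdec hαB hx hb hxb
  mem_of_ge := by
    rintro x _ hx ⟨b, hb, rfl⟩ hbx
    exact mem_image_pdsP_of_ge hB hα hdec hαB hx hb hbx

lemma disconn_Ioo_pdsP_of_not_decomp (hα : 0 < α.1) (hdec : ¬ Decomp α.2)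
    (h : Disconn (Ioo σ τ)) : Disconn (Ioo (α ⊕ₚ σ) (α ⊕ₚ τ)) := by
  rw [disconn_iff_exists_isComponentUnion] at h ⊢
  obtain ⟨B, hB, hne, ⟨c, hc⟩, hαB⟩ : ∃ B, IsComponentUnion B (Ioo σ τ) ∧ B.Nonempty ∧
      (Ioo σ τ \ B).Nonempty ∧ α ⊕ₚ σ ∉ B := by
    obtain ⟨B, hB, hne, hne'⟩ := h
    by_cases hαB : α ⊕ₚ σ ∈ B
    · exact ⟨_, hB.sdiff, hne', by rwa [sdiff_sdiff_cancel_left hB.subset], fun h ↦ h.2 hαB⟩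
    · exact ⟨B, hB, hne, hne', hαB⟩
  refine ⟨pdsP α '' B, hB.image_pdsP hα hdec hαB, hne.image _, α ⊕ₚ c,
    pdsP_mem_Ioo_iff.2 hc.1, ?_⟩
  rw [(pdsP_right_injective α).mem_set_image]
  exact hc.2

end Augmentation

/-- If the open interval `(σ,τ)` is disconnected, then for any permutation `α`
the open interval `(α ⊕ σ, α ⊕ τ)` is also disconnected. -/
theorem disconn_of_augment (σ τ : PermPt)
    (h : Disconn {π | plt σ π ∧ plt π τ}) (α : PermPt) :
    Disconn {π | plt (pdsP α σ) π ∧ plt π (pdsP α τ)} := by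
  induction α using pdsP_induction generalizing σ τ with
  | empty => rwa [pempty_pdsP, pempty_pdsP]
  | indec α hα hdec => exact disconn_Ioo_pdsP_of_not_decomp hα hdec h
  | sum a b iha ihb =>
    rw [pdsP_assoc, pdsP_assoc]
    exact iha _ _ (ihb _ _ h)
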